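/- Let H be a Hopf algebra over K and let (M, μ) be a right H-Hopf module algebra. Then the K-linear map P_R : M → M defined by P_R(m) = ∑ m₍₀₎ · S(m₍₁₎) is a Rota-Baxter operator of weight -1 on M, i.e. P_R(m)P_R(m') = P_R(m P_R(m')) + P_R(P_R(m) m') − P_R(mm') for all m, m' ∈ M. -/

import Mathlib

/-!
STATEMENT 0: If `(M, μ)` is a right `H`-Hopf module algebra over a Hopf algebra `H`,
then `P_R(m) = ∑ m₍₀₎ · S(m₍₁₎)` is a Rota-Baxter operator of weight `-1` on `M`.

The right `H`-module structure is given by a linear map `act : M ⊗ H →ₗ M`,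
the right `H`-comodule structure by `δ : M →ₗ M ⊗ H` (coassociative, counital),
and the various compatibilities are expressed as equalities of linear maps
applied to elements, using Mathlib's structural tensor maps (Sweedler-free form).
-/

open TensorProduct Coalgebra HopfAlgebra LinearMap

/-!
Linear maps `M → N` from a comodule to a module form a right module over the convolution algebra.
The projection `P = P_R` is `id` acted on by the antipode, so acting on `P` by `id` gives back `id`.
Consequently both `δ ∘ P` and `m ↦ P m ⊗ 1` become `δ` after acting by `Δ`; since `Δ` is
convolution invertible they agree, so `P` takes coinvariant values. Now `P (p * m) = p * P m` for
coinvariant `p`, while `P (m · h) = ε(h) P m` gives `P (m * P m') = P (m * m')`. The Rota-Baxter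
identity is the sum of these two one-sided identities.
-/

open WithConv

section RightAction

variable {R A B M N : Type*} [CommSemiring R] [Semiring A] [Algebra R A] [Semiring B] [Algebra R B]
  [AddCommMonoid M] [Module R M] [AddCommMonoid N] [Module R N]

/-- Right modules over an `R`-algebra, encoded by the linearised action `m ⊗ a ↦ m · a`. -/
structure IsRightAction (act : M ⊗[R] A →ₗ[R] M) : Prop where
  act_one (m : M) : act (m ⊗ₜ 1) = m
  act_act (m : M) (a b : A) : act (act (m ⊗ₜ a) ⊗ₜ b) = act (m ⊗ₜ (a * b))

variable (R A) in
lemma isRightAction_mul' : IsRightAction (mul' R A) where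
  act_one := by simp
  act_act := by simp [mul_assoc]

lemma IsRightAction.act_comp_rTensor_act {act : M ⊗[R] A →ₗ[R] M} (hact : IsRightAction act) :
    act ∘ₗ act.rTensor A =
      act ∘ₗ (mul' R A).lTensor M ∘ₗ (TensorProduct.assoc R M A A).toLinearMap := by
  ext m a b
  simp [hact.act_act]

/-- The componentwise action `(m ⊗ n) · (a ⊗ b) = m · a ⊗ n · b` of `A ⊗ B` on `M ⊗ N`. -/
def tensorAct (actM : M ⊗[R] A →ₗ[R] M) (actN : N ⊗[R] B →ₗ[R] N) :
    (M ⊗[R] N) ⊗[R] (A ⊗[R] B) →ₗ[R] M ⊗[R] N :=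
  TensorProduct.map actM actN ∘ₗ (tensorTensorTensorComm R M N A B).toLinearMap

@[simp]
lemma tensorAct_tmul (actM : M ⊗[R] A →ₗ[R] M) (actN : N ⊗[R] B →ₗ[R] N)
    (m : M) (n : N) (a : A) (b : B) :
    tensorAct actM actN ((m ⊗ₜ n) ⊗ₜ (a ⊗ₜ b)) = actM (m ⊗ₜ a) ⊗ₜ actN (n ⊗ₜ b) := by
  simp [tensorAct]

lemma IsRightAction.tensorAct {actM : M ⊗[R] A →ₗ[R] M} {actN : N ⊗[R] B →ₗ[R] N}
    (hM : IsRightAction actM) (hN : IsRightAction actN) : IsRightAction (tensorAct actM actN) where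
  act_one z := by
    induction z with
    | zero => simp
    | add x y hx hy => simp only [TensorProduct.add_tmul, map_add, hx, hy]
    | tmul m n => simp [Algebra.TensorProduct.one_def, hM.act_one, hN.act_one]
  act_act z c d := by
    induction z with
    | zero => simp
    | add x y hx hy => simp only [TensorProduct.add_tmul, map_add, hx, hy]
    | tmul m n =>
      induction c with
      | zero => simp
      | add x y hx hy =>
        simp only [TensorProduct.tmul_add, TensorProduct.add_tmul, map_add, add_mul, hx, hy]
      | tmul a b =>
        induction d with
        | zero => simp
        | add x y hx hy => simp only [TensorProduct.tmul_add, map_add, mul_add, hx, hy]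
        | tmul a' b' => simp [hM.act_act, hN.act_act]

end RightAction

section Convolution

variable {R B C M N : Type*} [CommSemiring R] [AddCommMonoid M] [Module R M]
  [AddCommMonoid N] [Module R N] [Semiring B] [Algebra R B] [AddCommMonoid C] [Module R C]
  [Coalgebra R C]

/-- Right comodules over an `R`-coalgebra, given by their coaction. -/
structure IsRightCoaction (δ : M →ₗ[R] M ⊗[R] C) : Prop where
  coassoc (m : M) : TensorProduct.assoc R M C C (δ.rTensor C (δ m)) =
    (comul (R := R) (A := C)).lTensor M (δ m)
  counital (m : M) : TensorProduct.rid R M ((counit (R := R) (A := C)).lTensor M (δ m)) = m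

/-- The action `m ↦ ∑ f(m₍₀₎) · g(m₍₁₎)` of `g : C → B`, viewed in the convolution algebra, on a
linear map `f` from a `C`-comodule to a `B`-module. -/
def convAct (act : N ⊗[R] B →ₗ[R] N) (δ : M →ₗ[R] M ⊗[R] C) (f : M →ₗ[R] N)
    (g : WithConv (C →ₗ[R] B)) : M →ₗ[R] N :=
  act ∘ₗ TensorProduct.map f g.ofConv ∘ₗ δ

variable {act : N ⊗[R] B →ₗ[R] N} {δ : M →ₗ[R] M ⊗[R] C}

lemma convAct_one (hact : IsRightAction act) (hδ : IsRightCoaction δ) (f : M →ₗ[R] N) :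
    convAct act δ f 1 = f := by
  have act_unit : act ∘ₗ TensorProduct.map f (Algebra.linearMap R B ∘ₗ counit) =
      f ∘ₗ (TensorProduct.rid R M).toLinearMap ∘ₗ (counit (R := R) (A := C)).lTensor M := by
    ext m c
    simp [Algebra.algebraMap_eq_smul_one, hact.act_one]
  ext m
  exact congr($act_unit (δ m)).trans (congrArg f (hδ.counital m))

lemma convAct_mul (hact : IsRightAction act) (hδ : IsRightCoaction δ) (f : M →ₗ[R] N)
    (g g' : WithConv (C →ₗ[R] B)) :
    convAct act δ f (g * g') = convAct act δ (convAct act δ f g) g' := by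
  have coassoc : (comul (R := R) (A := C)).lTensor M ∘ₗ δ =
      (TensorProduct.assoc R M C C).toLinearMap ∘ₗ δ.rTensor C ∘ₗ δ :=
    LinearMap.ext fun m ↦ (hδ.coassoc m).symm
  have map_convMul : TensorProduct.map f (g * g').ofConv = (mul' R B).lTensor N ∘ₗ
      TensorProduct.map f (TensorProduct.map g.ofConv g'.ofConv) ∘ₗ
        (comul (R := R) (A := C)).lTensor M := by
    rw [map_comp_lTensor, lTensor_comp_map]
    rfl
  calc
    _ = act ∘ₗ (mul' R B).lTensor N ∘ₗ
          TensorProduct.map f (TensorProduct.map g.ofConv g'.ofConv) ∘ₗ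
            (comul (R := R) (A := C)).lTensor M ∘ₗ δ := by
      rw [convAct, map_convMul]
      rfl
    _ = (act ∘ₗ (mul' R B).lTensor N ∘ₗ (TensorProduct.assoc R N B B).toLinearMap) ∘ₗ
          TensorProduct.map (TensorProduct.map f g.ofConv) g'.ofConv ∘ₗ δ.rTensor C ∘ₗ δ := by
      rw [coassoc]
      simp only [← comp_assoc, TensorProduct.map_map_comp_assoc_eq]
    _ = act ∘ₗ act.rTensor B ∘ₗ
          TensorProduct.map (TensorProduct.map f g.ofConv) g'.ofConv ∘ₗ δ.rTensor C ∘ₗ δ := by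
      rw [← hact.act_comp_rTensor_act, comp_assoc]
    _ = _ := by
      rw [← comp_assoc δ, map_comp_rTensor, ← comp_assoc δ, rTensor_comp_map]
      rfl

lemma convAct_injective_of_mul_eq_one (hact : IsRightAction act) (hδ : IsRightCoaction δ)
    {g g' : WithConv (C →ₗ[R] B)} (hg : g * g' = 1) :
    Function.Injective fun f : M →ₗ[R] N ↦ convAct act δ f g :=
  Function.LeftInverse.injective (g := fun f ↦ convAct act δ f g') fun f ↦ by
    dsimp only
    rw [← convAct_mul hact hδ, hg, convAct_one hact hδ]

end Convolution

section HopfModule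

variable {R H M : Type*} [CommSemiring R] [Semiring H] [AddCommMonoid M] [Module R M]

/-- Right Hopf modules over a bialgebra: a right module and right comodule `M` with
`δ (m · h) = δ m · Δ h`, where `H ⊗ H` acts componentwise on `M ⊗ H`. -/
structure IsRightHopfModule [Bialgebra R H] (act : M ⊗[R] H →ₗ[R] M) (δ : M →ₗ[R] M ⊗[R] H) :
    Prop extends IsRightAction act, IsRightCoaction δ where
  coact_act (m : M) (h : H) :
    δ (act (m ⊗ₜ h)) = tensorAct act (mul' R H) (δ m ⊗ₜ comul h)

/-- Coinvariant elements `m` of a right comodule over a bialgebra. -/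
def IsCoinvariant [Bialgebra R H] (δ : M →ₗ[R] M ⊗[R] H) (m : M) : Prop :=
  δ m = m ⊗ₜ 1

/-- The map `P_R : m ↦ ∑ m₍₀₎ · S(m₍₁₎)`, which projects a right Hopf module onto its
coinvariants. -/
def coinvariantProj [HopfAlgebra R H] (act : M ⊗[R] H →ₗ[R] M) (δ : M →ₗ[R] M ⊗[R] H) :
    M →ₗ[R] M :=
  act ∘ₗ (antipode R (A := H)).lTensor M ∘ₗ δ

section Bialgebra

variable [Bialgebra R H] {act : M ⊗[R] H →ₗ[R] M} {δ : M →ₗ[R] M ⊗[R] H}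

lemma IsRightHopfModule.coact_comp_convAct_id (hM : IsRightHopfModule act δ) (f : M →ₗ[R] M) :
    δ ∘ₗ convAct act δ f (toConv LinearMap.id) =
      convAct (tensorAct act (mul' R H)) δ (δ ∘ₗ f) (toConv comul) := by
  have coact_act : δ ∘ₗ act ∘ₗ TensorProduct.map f LinearMap.id =
      tensorAct act (mul' R H) ∘ₗ TensorProduct.map (δ ∘ₗ f) comul := by
    ext m h
    simp [hM.coact_act]
  exact congr($coact_act ∘ₗ δ)

lemma IsRightCoaction.convAct_tmul_one_comul (hδ : IsRightCoaction δ) (f : M →ₗ[R] M) :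
    convAct (tensorAct act (mul' R H)) δ ((TensorProduct.mk R M H).flip 1 ∘ₗ f) (toConv comul) =
      (convAct act δ f (toConv LinearMap.id)).rTensor H ∘ₗ δ := by
  have act_comul : tensorAct act (mul' R H) ∘ₗ
      TensorProduct.map ((TensorProduct.mk R M H).flip 1 ∘ₗ f) comul =
      (act ∘ₗ f.rTensor H).rTensor H ∘ₗ (TensorProduct.assoc R M H H).symm.toLinearMap ∘ₗ
        (comul (R := R) (A := H)).lTensor M := by
    ext m h
    simp only [AlgebraTensorModule.curry_apply, restrictScalars_self, curry_apply, coe_comp,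
      Function.comp_apply, map_tmul, flip_apply, mk_apply, lTensor_tmul, LinearEquiv.coe_coe]
    induction comul (R := R) h with
    | zero => simp
    | add x y hx hy => simp only [map_add, TensorProduct.tmul_add, hx, hy]
    | tmul a b => simp
  ext m
  calc
    _ = (act ∘ₗ f.rTensor H).rTensor H ((TensorProduct.assoc R M H H).symm
          ((comul (R := R) (A := H)).lTensor M (δ m))) := congr($act_comul (δ m))
    _ = (act ∘ₗ f.rTensor H).rTensor H (δ.rTensor H (δ m)) := by
      rw [← hδ.coassoc, LinearEquiv.symm_apply_apply]
    _ = _ := (rTensor_comp_apply ..).symm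

end Bialgebra

variable [HopfAlgebra R H] {act : M ⊗[R] H →ₗ[R] M} {δ : M →ₗ[R] M ⊗[R] H}

lemma IsRightHopfModule.convAct_coinvariantProj_id (hM : IsRightHopfModule act δ) :
    convAct act δ (coinvariantProj act δ) (toConv LinearMap.id) = LinearMap.id := by
  have proj_eq : coinvariantProj act δ = convAct act δ LinearMap.id (toConv (antipode R)) := rfl
  rw [proj_eq, ← convAct_mul hM.toIsRightAction hM.toIsRightCoaction, antipode_mul_id,
    convAct_one hM.toIsRightAction hM.toIsRightCoaction]

theorem IsRightHopfModule.isCoinvariant_coinvariantProj (hM : IsRightHopfModule act δ) (m : M) :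
    IsCoinvariant δ (coinvariantProj act δ m) := by
  have comul_inj := convAct_injective_of_mul_eq_one (N := M ⊗[R] H)
    (hM.toIsRightAction.tensorAct (isRightAction_mul' R H)) hM.toIsRightCoaction
    (comul_right_inv (R := R) (C := H))
  suffices δ ∘ₗ coinvariantProj act δ =
      (TensorProduct.mk R M H).flip 1 ∘ₗ coinvariantProj act δ from congr($this m)
  apply comul_inj
  dsimp only
  rw [← hM.coact_comp_convAct_id, hM.toIsRightCoaction.convAct_tmul_one_comul,
    hM.convAct_coinvariantProj_id, rTensor_id, comp_id, id_comp]

lemma IsRightHopfModule.coinvariantProj_act (hM : IsRightHopfModule act δ) (m : M) (h : H) :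
    coinvariantProj act δ (act (m ⊗ₜ h)) = counit (R := R) h • coinvariantProj act δ m := by
  have act_antipode (x : M) (a : H) (w : H ⊗[R] H) :
      act ((antipode R).lTensor M (tensorAct act (mul' R H) ((x ⊗ₜ a) ⊗ₜ w))) =
        act (x ⊗ₜ (mul' R H ((antipode R).lTensor H w) * antipode R a)) := by
    induction w with
    | zero => simp
    | add x y hx hy => simp only [map_add, TensorProduct.tmul_add, add_mul, hx, hy]
    | tmul b c => simp [antipode_mul_antidistrib, hM.act_act, mul_assoc]
  simp only [coinvariantProj, coe_comp, Function.comp_apply, hM.coact_act]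
  induction δ m with
  | zero => simp
  | add x y hx hy => simp only [TensorProduct.add_tmul, map_add, smul_add, hx, hy]
  | tmul x a =>
    rw [act_antipode, mul_antipode_lTensor_comul_apply, ← Algebra.smul_def,
      TensorProduct.tmul_smul, map_smul, lTensor_tmul]

end HopfModule

section HopfModuleAlgebra

variable {R H M : Type*} [CommSemiring R] [Semiring H] [NonUnitalNonAssocSemiring M] [Module R M]
  [SMulCommClass R M M] [IsScalarTower R M M]

/-- Right Hopf module algebras: the multiplication is right-linear in its second argument and
the coaction is multiplicative. The multiplication of `M` may be nonassociative. -/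
structure IsRightHopfModuleAlgebra [Bialgebra R H] (act : M ⊗[R] H →ₗ[R] M)
    (δ : M →ₗ[R] M ⊗[R] H) : Prop extends IsRightHopfModule act δ where
  mul_act (m m' : M) (h : H) : act ((m * m') ⊗ₜ h) = m * act (m' ⊗ₜ h)
  coact_mul (m m' : M) : δ (m * m') = δ m * δ m'

variable [HopfAlgebra R H] {act : M ⊗[R] H →ₗ[R] M} {δ : M →ₗ[R] M ⊗[R] H}

lemma IsRightHopfModuleAlgebra.coinvariantProj_mul_of_isCoinvariant
    (hM : IsRightHopfModuleAlgebra act δ) {p : M} (hp : IsCoinvariant δ p) (m : M) :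
    coinvariantProj act δ (p * m) = p * coinvariantProj act δ m := by
  have coact_p : δ p = p ⊗ₜ 1 := hp
  simp only [coinvariantProj, coe_comp, Function.comp_apply, hM.coact_mul, coact_p]
  induction δ m with
  | zero => simp
  | add x y hx hy => simp only [map_add, mul_add, hx, hy]
  | tmul x h => simp [hM.mul_act]

lemma IsRightHopfModuleAlgebra.coinvariantProj_mul_coinvariantProj
    (hM : IsRightHopfModuleAlgebra act δ) (m m' : M) :
    coinvariantProj act δ (m * coinvariantProj act δ m') = coinvariantProj act δ (m * m') := by
  have proj_mul_act (z : M ⊗[R] H) :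
      coinvariantProj act δ (m * act ((antipode R).lTensor M z)) =
        coinvariantProj act δ
          (m * TensorProduct.rid R M ((counit (R := R) (A := H)).lTensor M z)) := by
    induction z with
    | zero => simp
    | add x y hx hy => simp only [map_add, mul_add, hx, hy]
    | tmul x h => simp [← hM.mul_act, hM.coinvariantProj_act, mul_smul_comm]
  exact (proj_mul_act (δ m')).trans (by rw [hM.counital])

end HopfModuleAlgebra

/-- Rota-Baxter operators of weight `r` on a possibly nonassociative `R`-algebra. -/
def IsRotaBaxter {R A : Type*} [CommSemiring R] [NonUnitalNonAssocSemiring A] [Module R A]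
    (r : R) (P : A →ₗ[R] A) : Prop :=
  ∀ x y : A, P x * P y = P (x * P y) + P (P x * y) + r • P (x * y)

theorem rightHopfModuleAlgebra_PR_isRotaBaxter_weight_neg_one_general
    {R H M : Type*} [CommRing R] [Semiring H] [HopfAlgebra R H] [NonUnitalNonAssocRing M]
    [Module R M] [SMulCommClass R M M] [IsScalarTower R M M]
    {act : M ⊗[R] H →ₗ[R] M} {δ : M →ₗ[R] M ⊗[R] H} (hM : IsRightHopfModuleAlgebra act δ) :
    IsRotaBaxter (-1 : R) (coinvariantProj act δ) := fun m m' ↦ by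
  rw [hM.coinvariantProj_mul_coinvariantProj,
    hM.coinvariantProj_mul_of_isCoinvariant (hM.isCoinvariant_coinvariantProj m), neg_one_smul]
  abel

theorem rightHopfModuleAlgebra_PR_isRotaBaxter_weight_neg_one
    (K : Type*) [Field K] [CharZero K]
    (H : Type*) [Ring H] [HopfAlgebra K H]
    (M : Type*) [NonUnitalRing M] [Module K M]
    [SMulCommClass K M M] [IsScalarTower K M M]
    -- right H-module structure on M
    (act : M ⊗[K] H →ₗ[K] M)
    (act_one : ∀ m : M, act (m ⊗ₜ[K] (1 : H)) = m)
    (act_mul : ∀ (m : M) (h h' : H),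
      act (act (m ⊗ₜ[K] h) ⊗ₜ[K] h') = act (m ⊗ₜ[K] (h * h')))
    -- right H-comodule structure on M
    (δ : M →ₗ[K] M ⊗[K] H)
    (coassoc : ∀ m : M,
      (TensorProduct.assoc K M H H) ((δ.rTensor H) (δ m)) =
        ((Coalgebra.comul (R := K) (A := H)).lTensor M) (δ m))
    (counital : ∀ m : M,
      (TensorProduct.rid K M) (((Coalgebra.counit (R := K) (A := H)).lTensor M) (δ m)) = m)
    -- Hopf module compatibility: δ(m · h) = δ(m)Δ(h)
    (hopf_compat : ∀ (m : M) (h : H),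
      δ (act (m ⊗ₜ[K] h)) =
        (TensorProduct.map act (LinearMap.mul' K H))
          ((TensorProduct.tensorTensorTensorComm K M H H H)
            (δ m ⊗ₜ[K] Coalgebra.comul h)))
    -- (mm') · h = m (m' · h)
    (mul_act : ∀ (m m' : M) (h : H),
      act ((m * m') ⊗ₜ[K] h) = m * act (m' ⊗ₜ[K] h))
    -- δ(mm') = ∑ m₍₀₎m'₍₀₎ ⊗ m₍₁₎m'₍₁₎
    (δ_mul : ∀ m m' : M,
      δ (m * m') =
        (TensorProduct.map (LinearMap.mul' K M) (LinearMap.mul' K H))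
          ((TensorProduct.tensorTensorTensorComm K M H M H) (δ m ⊗ₜ[K] δ m'))) :
    -- P_R(m) = ∑ m₍₀₎ · S(m₍₁₎) is a Rota-Baxter operator of weight -1
    ∀ m m' : M,
      (act (((antipode (R := K) (A := H)).lTensor M) (δ m))) *
        (act (((antipode (R := K) (A := H)).lTensor M) (δ m'))) =
      act (((antipode (R := K) (A := H)).lTensor M)
          (δ (m * act (((antipode (R := K) (A := H)).lTensor M) (δ m'))))) +
      act (((antipode (R := K) (A := H)).lTensor M)
          (δ ((act (((antipode (R := K) (A := H)).lTensor M) (δ m))) * m'))) +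
      (-1 : K) • act (((antipode (R := K) (A := H)).lTensor M) (δ (m * m'))) := by
  exact rightHopfModuleAlgebra_PR_isRotaBaxter_weight_neg_one_general
    { act_one, act_act := act_mul, coassoc, counital, coact_act := hopf_compat, mul_act,
      coact_mul m m' := by rw [δ_mul, ← mul'_apply (R := K), mul'_tensor]; rfl }
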